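/- arXiv:math/0207054 — 5 statements merged into one kernel-verified Lean document; each statement's English description precedes it below -/
import Mathlib

section
/- The scalar curvature function H₂ is monotone on the cone Γ₂: for every κ ∈ Γ₂ one has H(κ) > 0 and H(κ) − κᵢ > 0 for every index i, i.e. all partial derivatives ∂H₂/∂κᵢ are strictly positive on Γ₂. -/
/-!
On `{H₂ > 0}` one has `H² > Σⱼ κⱼ² ≥ κᵢ²`, so `|κᵢ| < |H|` and `H` has no zero there
(`sum_sq_lt_of_mem_Gamma2`).
Since `H` is continuous and positive at `(1, …, 1)`, it stays positive on the connected
component `Γ₂` (`Hsum_pos_of_mem_Gamma2`). Then `κᵢ ≤ |κᵢ| < H`, and `∂H₂/∂κᵢ = H − κᵢ`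
(`fderiv_H2_single`).
-/

noncomputable section

/-- `H κ = Σᵢ κᵢ`. -/
def Hsum {n : ℕ} (κ : Fin n → ℝ) : ℝ := ∑ i, κ i

/-- `H₂ κ = ½(H(κ)² − Σᵢ κᵢ²)`. -/
def H2 {n : ℕ} (κ : Fin n → ℝ) : ℝ := (Hsum κ ^ 2 - ∑ i, κ i ^ 2) / 2

/-- `Γ₂ ⊆ ℝⁿ` is the connected component of `{H₂ > 0}` containing the positive cone. -/
def Gamma2 (n : ℕ) : Set (Fin n → ℝ) :=
  connectedComponentIn {κ : Fin n → ℝ | 0 < H2 κ} (fun _ => 1)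

theorem sum_sq_lt_of_mem_Gamma2 {n : ℕ} {κ : Fin n → ℝ} (hκ : κ ∈ Gamma2 n) :
    ∑ i, κ i ^ 2 < Hsum κ ^ 2 := by
  have h : κ ∈ {κ : Fin n → ℝ | 0 < H2 κ} := connectedComponentIn_subset _ _ hκ
  rw [Set.mem_ofPred_eq, H2] at h
  linarith

theorem Hsum_pos_of_mem_Gamma2 {n : ℕ} {κ : Fin n → ℝ} (hκ : κ ∈ Gamma2 n) :
    0 < Hsum κ := by
  have hone : (fun _ => 1 : Fin n → ℝ) ∈ Gamma2 n :=
    mem_connectedComponentIn (connectedComponentIn_nonempty_iff.mp ⟨κ, hκ⟩)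
  have hcont : Continuous (Hsum : (Fin n → ℝ) → ℝ) := by
    unfold Hsum
    fun_prop
  by_contra! hle
  have hone_nonneg : 0 ≤ Hsum (fun _ => 1 : Fin n → ℝ) := by simp [Hsum]
  -- Otherwise `H` would vanish somewhere on the connected set `Γ₂`.
  obtain ⟨x, hx, hx0⟩ := isPreconnected_connectedComponentIn.intermediate_value hκ hone
    hcont.continuousOn ⟨hle, hone_nonneg⟩
  have hlt := sum_sq_lt_of_mem_Gamma2 hx
  have hnonneg : 0 ≤ ∑ i, x i ^ 2 := Finset.sum_nonneg fun i _ => sq_nonneg (x i)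
  rw [hx0] at hlt
  linarith

theorem fderiv_H2_single {n : ℕ} (κ : Fin n → ℝ) (i : Fin n) :
    fderiv ℝ H2 κ (Pi.single i 1) = Hsum κ - κ i := by
  have hproj (j : Fin n) : HasFDerivAt (fun x : Fin n → ℝ => x j)
      (ContinuousLinearMap.proj j : (Fin n → ℝ) →L[ℝ] ℝ) κ := hasFDerivAt_apply j κ
  have hsum := HasFDerivAt.fun_sum (u := Finset.univ) fun j _ => hproj j
  have hsq := HasFDerivAt.fun_sum (u := Finset.univ) fun j _ => (hproj j).pow 2
  have h := ((hsum.pow 2).sub hsq).mul_const (1 / 2 : ℝ)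
  have hH2 : (H2 : (Fin n → ℝ) → ℝ) =
      fun x => ((∑ j, x j) ^ 2 - ∑ j, x j ^ 2) * (1 / 2) := by
    funext x
    simp only [H2, Hsum]
    ring
  rw [hH2]
  refine (congrArg (fun L => L (Pi.single i 1)) h.fderiv).trans ?_
  simp [Hsum, Pi.single_apply]
  ring

/-- `H₂` is monotone on `Γ₂`: for `κ ∈ Γ₂` one has `H(κ) > 0` and
`H(κ) − κᵢ > 0` for every `i`, i.e. all partial derivatives `∂H₂/∂κᵢ` are strictly
positive on `Γ₂`. -/
theorem stmt2 {n : ℕ} (hn : 2 ≤ n) (κ : Fin n → ℝ) (hκ : κ ∈ Gamma2 n) :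
    0 < Hsum κ ∧ (∀ i, 0 < Hsum κ - κ i) ∧
    ∀ i, 0 < fderiv ℝ H2 κ (Pi.single i 1) := by
  have hH := Hsum_pos_of_mem_Gamma2 hκ
  have hi (i : Fin n) : 0 < Hsum κ - κ i := by
    have hlt := sum_sq_lt_of_mem_Gamma2 hκ
    have hle : κ i ^ 2 ≤ ∑ j, κ j ^ 2 :=
      Finset.single_le_sum (fun j _ => sq_nonneg (κ j)) (Finset.mem_univ i)
    exact sub_pos.mpr (lt_of_pow_lt_pow_left₀ 2 hH.le (hle.trans_lt hlt))
  exact ⟨hH, hi, fun i => (fderiv_H2_single κ i).symm ▸ hi i⟩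
end
end

section
/- Let Γ ⊆ ℝⁿ be an open cone, and let F be continuous on the closure of Γ, C¹ on Γ, with F > 0 on Γ, F = 0 on ∂Γ, ∂F/∂κᵢ > 0 on Γ for every i, and H(κ) = Σᵢκᵢ > 0 for all κ ∈ Γ. Then for every ε > 0 one has Γ ⊆ Γ_ε, i.e. κ + εH(κ)(1,…,1) ∈ Γ for every κ ∈ Γ, and moreover H(κ) > 0 for every κ ∈ Γ_ε. -/
/-!
Moving from `κ ∈ Γ` in the direction `(1,…,1)`, the function `F` does not decrease as long as the
ray stays in `Γ`, because all partial derivatives are positive there. At a first exit point, which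
lies on `∂Γ`, continuity up to the boundary would give `0 < F κ ≤ F (exit point) = 0`. Hence the
whole ray stays in `Γ` (`ray_mem`), which gives `Γ ⊆ Γ_ε` since `ε H(κ) > 0`. The second claim
follows from `H(φ_ε(κ)) = (1 + nε) H(κ)` (`Hsum_phi`).
-/

noncomputable section

/-- `φ_ε(κ) = (κᵢ + εH(κ))ᵢ`, so that `Γ_ε = φ_ε⁻¹(Γ)`. -/
def phi (ε : ℝ) {n : ℕ} (κ : Fin n → ℝ) : Fin n → ℝ := fun i => κ i + ε * Hsum κ

theorem Hsum_phi {n : ℕ} (ε : ℝ) (κ : Fin n → ℝ) :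
    Hsum (phi ε κ) = (1 + n * ε) * Hsum κ := by
  have h : Hsum (phi ε κ) = ∑ i, (κ i + ε * Hsum κ) := rfl
  rw [h, Finset.sum_add_distrib, Finset.sum_const, Finset.card_univ, Fintype.card_fin,
    nsmul_eq_mul]
  have h' : ∑ i, κ i = Hsum κ := rfl
  rw [h']
  ring

/-- A ray in the direction `(1,…,1)` that starts in `Γ` never leaves `Γ`. -/
theorem ray_mem {n : ℕ} (Γ : Set (Fin n → ℝ)) (hopen : IsOpen Γ)
    (F : (Fin n → ℝ) → ℝ)
    (hFc : ContinuousOn F (closure Γ))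
    (hFd : ContDiffOn ℝ 1 F Γ)
    (hFpos : ∀ κ ∈ Γ, 0 < F κ)
    (hFzero : ∀ κ ∈ frontier Γ, F κ = 0)
    (hFmono : ∀ κ ∈ Γ, ∀ i, 0 < fderiv ℝ F κ (Pi.single i 1))
    (κ : Fin n → ℝ) (hκ : κ ∈ Γ) (s : ℝ) (hs : 0 ≤ s) :
    κ + s • (1 : Fin n → ℝ) ∈ Γ := by
  set g : ℝ → (Fin n → ℝ) := fun t => κ + t • (1 : Fin n → ℝ) with hg
  have hgc : Continuous g := by fun_prop
  have hg0 : g 0 = κ := by simp [hg]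
  by_contra hsΓ
  -- `T` is the first exit time of the ray.
  set S : Set ℝ := Set.Ici 0 ∩ g ⁻¹' Γᶜ with hS
  have hSc : IsClosed S := isClosed_Ici.inter (hopen.isClosed_compl.preimage hgc)
  have hSb : BddBelow S := ⟨0, fun t ht => ht.1⟩
  have hTS : sInf S ∈ S := hSc.csInf_mem ⟨s, hs, hsΓ⟩ hSb
  set T := sInf S with hT
  have hT0 : 0 ≤ T := hTS.1
  have hTΓ : g T ∉ Γ := hTS.2
  have hTpos : 0 < T := by
    rcases hT0.lt_or_eq with h | h
    · exact h
    · rw [← h, hg0] at hTΓ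
      exact absurd hκ hTΓ
  have hin : ∀ t ∈ Set.Ico 0 T, g t ∈ Γ := by
    intro t ht
    by_contra h
    exact absurd (csInf_le hSb (show t ∈ S from ⟨ht.1, h⟩)) (not_le.mpr ht.2)
  have hcl : ∀ t ∈ Set.Icc 0 T, g t ∈ closure Γ := by
    intro t ht
    rw [← closure_Ico hTpos.ne] at ht
    exact map_mem_closure hgc ht hin
  have hfr : g T ∈ frontier Γ := by
    rw [frontier, hopen.interior_eq]
    exact ⟨hcl T ⟨hT0, le_rfl⟩, hTΓ⟩
  have hderiv : ∀ t ∈ interior (Set.Icc 0 T),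
      HasDerivWithinAt (F ∘ g) (fderiv ℝ F (g t) 1) (interior (Set.Icc 0 T)) t := by
    intro t ht
    rw [interior_Icc] at ht
    have hmem := hin t ⟨ht.1.le, ht.2⟩
    have hF : HasFDerivAt F (fderiv ℝ F (g t)) (g t) :=
      ((hFd.differentiableOn one_ne_zero).differentiableAt (hopen.mem_nhds hmem)).hasFDerivAt
    have hg' : HasDerivAt g 1 t := by
      have h := ((hasDerivAt_id t).smul_const (1 : Fin n → ℝ)).const_add κ
      rw [one_smul] at h
      exact h
    exact (hF.comp_hasDerivAt t hg').hasDerivWithinAt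
  have hmono : MonotoneOn (F ∘ g) (Set.Icc 0 T) := by
    refine monotoneOn_of_hasDerivWithinAt_nonneg (convex_Icc 0 T)
      (hFc.comp hgc.continuousOn hcl) hderiv ?_
    intro t ht
    rw [interior_Icc] at ht
    have h1 : (1 : Fin n → ℝ) = ∑ i, Pi.single i 1 := (Finset.univ_sum_single 1).symm
    rw [h1, map_sum]
    exact Finset.sum_nonneg fun i _ => (hFmono _ (hin t ⟨ht.1.le, ht.2⟩) i).le
  have hle := hmono ⟨le_rfl, hT0⟩ ⟨hT0, le_rfl⟩ hT0
  simp only [Function.comp_apply, hg0, hFzero _ hfr] at hle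
  exact absurd (hFpos κ hκ) (not_lt.mpr hle)

/-- let `Γ` be an open cone, `F` continuous on `closure Γ`, `C¹` on `Γ`,
positive on `Γ`, vanishing on `∂Γ`, with strictly positive partial derivatives on `Γ`, and
`H > 0` on `Γ`.  Then for every `ε > 0`: `Γ ⊆ Γ_ε`, i.e. `κ + εH(κ)(1,…,1) ∈ Γ` for every
`κ ∈ Γ`, and `H(κ) > 0` for every `κ ∈ Γ_ε`. -/
theorem stmt4 {n : ℕ} (Γ : Set (Fin n → ℝ)) (hopen : IsOpen Γ)
    (hcone : ∀ κ ∈ Γ, ∀ t : ℝ, 0 < t → t • κ ∈ Γ)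
    (F : (Fin n → ℝ) → ℝ)
    (hFc : ContinuousOn F (closure Γ))
    (hFd : ContDiffOn ℝ 1 F Γ)
    (hFpos : ∀ κ ∈ Γ, 0 < F κ)
    (hFzero : ∀ κ ∈ frontier Γ, F κ = 0)
    (hFmono : ∀ κ ∈ Γ, ∀ i, 0 < fderiv ℝ F κ (Pi.single i 1))
    (hH : ∀ κ ∈ Γ, 0 < Hsum κ)
    (ε : ℝ) (hε : 0 < ε) :
    (∀ κ ∈ Γ, phi ε κ ∈ Γ) ∧ (∀ κ : Fin n → ℝ, phi ε κ ∈ Γ → 0 < Hsum κ) := by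
  refine ⟨fun κ hκ => ?_, fun κ hκ => ?_⟩
  · have h := ray_mem Γ hopen F hFc hFd hFpos hFzero hFmono κ hκ (ε * Hsum κ)
      (mul_pos hε (hH κ hκ)).le
    convert h using 1
    ext i
    simp [phi]
  · have h := hH _ hκ
    rw [Hsum_phi] at h
    exact (pos_iff_pos_of_mul_pos h).mp (by positivity)
end
end

section
/- Let Γ ⊆ ℝⁿ be an open convex cone containing the positive cone Γ₊, and let F be continuous on the closure of Γ, positive on Γ, vanishing on ∂Γ, concave and positively homogeneous of degree 1 on Γ, with H(κ) = Σᵢκᵢ > 0 on Γ. Fix δ > 0 and κ̄ > 0. Then there exist ε₁ = ε₁(δ, κ̄, F) > 0 and a compact set K ⊆ Γ such that for all 0 < ε ≤ ε₁ the set {κ ∈ Γ_ε : δ ≤ F_ε(κ) and κᵢ ≤ κ̄ for all i} is contained in K; i.e. these sets are contained in a compact subset of Γ uniformly in ε for small ε. -/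
/-!
The bounds `κᵢ ≤ κ̄` together with `H(κ) > 0` (which follows from `H(φ_ε(κ)) = (1 + nε) H(κ)`)
confine `κ` to a fixed box and give `0 < H(κ) ≤ nκ̄`. Hence for `ε ≤ 1` the point `φ_ε(κ)` lies in
the set `K₀` of all `x ∈ closure Γ` in a fixed closed ball with `δ ≤ F x`. This set is compact, and
it is contained in `Γ` because `F` vanishes on `∂Γ`. Some closed thickening of `K₀` is then still a
compact subset of `Γ`, and it contains `κ` since `|φ_ε(κ) - κ| = ε H(κ)` is uniformly small.
-/

noncomputable section

theorem Hsum_le {n : ℕ} {κ : Fin n → ℝ} {b : ℝ} (h : ∀ i, κ i ≤ b) : Hsum κ ≤ n * b := by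
  simpa [Hsum] using Finset.sum_le_sum (s := Finset.univ) fun i _ => h i

/-- Upper bounds on all entries and positivity of the sum bound each entry from below. -/
theorem neg_le_of_Hsum_pos {n : ℕ} {κ : Fin n → ℝ} {b : ℝ} (hb : 0 < b) (h : ∀ i, κ i ≤ b)
    (hH : 0 < Hsum κ) (i : Fin n) : -(n * b) ≤ κ i := by
  have h1 : b - κ i ≤ ∑ j, (b - κ j) :=
    Finset.single_le_sum (f := fun j => b - κ j) (fun j _ => sub_nonneg.2 (h j))
      (Finset.mem_univ i)
  have h2 : ∑ j, (b - κ j) = n * b - Hsum κ := by simp [Hsum]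
  linarith

/-- with `Γ`, `F` as in Statement 9 and fixed `δ > 0`, `κ̄ > 0`, there
exist `ε₁ = ε₁(δ,κ̄,F) > 0` and a compact set `K ⊆ Γ` such that for all `0 < ε ≤ ε₁`,
`{κ ∈ Γ_ε : δ ≤ F_ε(κ), κᵢ ≤ κ̄ ∀i} ⊆ K`; i.e. these sets lie in a compact subset of `Γ`
uniformly in `ε` for small `ε`. -/
theorem stmt10 {n : ℕ} (Γ : Set (Fin n → ℝ)) (hopen : IsOpen Γ) (hconv : Convex ℝ Γ)
    (hcone : ∀ κ ∈ Γ, ∀ t : ℝ, 0 < t → t • κ ∈ Γ)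
    (hpos : {κ : Fin n → ℝ | ∀ i, 0 < κ i} ⊆ Γ)
    (F : (Fin n → ℝ) → ℝ)
    (hFc : ContinuousOn F (closure Γ))
    (hFpos : ∀ κ ∈ Γ, 0 < F κ)
    (hFzero : ∀ κ ∈ frontier Γ, F κ = 0)
    (hFconc : ConcaveOn ℝ Γ F)
    (hFhom : ∀ κ ∈ Γ, ∀ t : ℝ, 0 < t → F (t • κ) = t * F κ)
    (hH : ∀ κ ∈ Γ, 0 < Hsum κ)
    (δ : ℝ) (hδ : 0 < δ) (κbar : ℝ) (hκbar : 0 < κbar) :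
    ∃ ε₁ : ℝ, 0 < ε₁ ∧ ∃ K : Set (Fin n → ℝ), IsCompact K ∧ K ⊆ Γ ∧
      ∀ ε : ℝ, 0 < ε → ε ≤ ε₁ →
        {κ : Fin n → ℝ | phi ε κ ∈ Γ ∧ δ ≤ F (phi ε κ) ∧ ∀ i, κ i ≤ κbar} ⊆ K := by
  set M : ℝ := (n + 1) * κbar with hM
  have hn : (0 : ℝ) ≤ n := n.cast_nonneg
  have hM0 : 0 < M := by positivity
  set K₀ : Set (Fin n → ℝ) :=
    (closure Γ ∩ Metric.closedBall 0 (2 * M)) ∩ F ⁻¹' Set.Ici δ with hK₀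
  have hK₀c : IsCompact K₀ := by
    have hcl : IsClosed K₀ :=
      (hFc.mono Set.inter_subset_left).preimage_isClosed_of_isClosed
        (isClosed_closure.inter Metric.isClosed_closedBall) isClosed_Ici
    exact (isCompact_closedBall (0 : Fin n → ℝ) (2 * M)).of_isClosed_subset hcl
      fun x hx => hx.1.2
  have hK₀Γ : K₀ ⊆ Γ := by
    rintro x ⟨⟨hx, -⟩, hxF⟩
    by_contra hxΓ
    have h0 := hFzero x ⟨hx, by rwa [hopen.interior_eq]⟩
    have : δ ≤ F x := hxF
    linarith
  obtain ⟨η, hη, hηΓ⟩ := hK₀c.exists_cthickening_subset_open hopen hK₀Γ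
  refine ⟨min 1 (η / M), lt_min one_pos (div_pos hη hM0), Metric.cthickening η K₀,
    hK₀c.cthickening, hηΓ, ?_⟩
  rintro ε hε hε₁ κ ⟨hκΓ, hκF, hκ⟩
  have hHpos : 0 < Hsum κ := by
    have h := hH _ hκΓ
    rw [Hsum_phi] at h
    exact (pos_iff_pos_of_mul_pos h).1 (by positivity)
  have hHM : Hsum κ ≤ M := by
    have := Hsum_le hκ
    linarith
  have hε1 : ε ≤ 1 := hε₁.trans (min_le_left _ _)
  have hεM : ε * M ≤ η := (le_div_iff₀ hM0).1 (hε₁.trans (min_le_right _ _))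
  have hεH : 0 < ε * Hsum κ := by positivity
  have hεHM : ε * Hsum κ ≤ ε * M := by gcongr
  have hεHM1 : ε * M ≤ M := mul_le_of_le_one_left hM0.le hε1
  refine Metric.mem_cthickening_of_dist_le κ (phi ε κ) η K₀
    ⟨⟨subset_closure hκΓ, ?_⟩, hκF⟩ ?_
  · rw [mem_closedBall_zero_iff, pi_norm_le_iff_of_nonneg (by positivity)]
    intro i
    have h1 := neg_le_of_Hsum_pos hκbar hκ hHpos i
    have h2 := hκ i
    have h3 : (0 : ℝ) ≤ n * κbar := by positivity
    rw [Real.norm_eq_abs, abs_le]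
    constructor <;> simp only [phi] <;> linarith
  · rw [dist_pi_le_iff hη.le]
    intro i
    rw [Real.dist_eq, abs_le]
    constructor <;> simp only [phi] <;> linarith
end
end

section
/- Let Γ ⊆ ℝⁿ be an open convex cone that is invariant under permutations of the coordinates, and let F ∈ C²(Γ) be positive and symmetric (invariant under permutations of its arguments), with ∂F/∂κᵢ > 0 on Γ for all i, and such that log F is concave on Γ. Let κ ∈ Γ and let i₀ be an index such that κ_{i₀} is either negative or equal to the smallest component of κ. Then Σᵢ ∂F/∂κᵢ(κ)·κᵢ² ≥ (1/n)·(Σᵢ ∂F/∂κᵢ(κ))·κ_{i₀}². -/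
noncomputable section

/-!
Comparison of values on the segment joining a point to its image under a transposition shows that
a symmetric quasi-concave function has its largest partial derivative at the smallest coordinate
(`fderiv_single_le_of_le`); log-concavity of `F` gives quasi-concavity. Hence, if `κ m` is the
minimum, `∂ₘF(κ) ≥ (1/n) ∑ ∂ᵢF(κ)`, and the single term `∂ₘF(κ) κₘ²` of the nonnegative
right-hand sum already dominates. If `κ i₀ < 0` then `κ m ≤ κ i₀ < 0`, so `κ i₀ ^ 2 ≤ κ m ^ 2`.
-/

/-- Smaller coordinates carry larger partial derivatives. For small `t > 0` the point `κ` lies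
between `x = κ + t (e_j - e_i)` and its transposition `x ∘ swap i j`; `F` takes the same value at
both, so concavity of `log F` gives `F x ≤ F κ`, and the derivative along `e_j - e_i` is `≤ 0`. -/
lemma fderiv_single_le_of_le {n : ℕ} {Γ : Set (Fin n → ℝ)} (hopen : IsOpen Γ)
    (hperm : ∀ σ : Equiv.Perm (Fin n), ∀ κ ∈ Γ, (κ ∘ σ) ∈ Γ)
    {F : (Fin n → ℝ) → ℝ} (hFpos : ∀ κ ∈ Γ, 0 < F κ)
    (hFsym : ∀ σ : Equiv.Perm (Fin n), ∀ κ ∈ Γ, F (κ ∘ σ) = F κ)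
    (hlog : ConcaveOn ℝ Γ (fun κ => Real.log (F κ)))
    {κ : Fin n → ℝ} (hκ : κ ∈ Γ) (hd : DifferentiableAt ℝ F κ) {i j : Fin n} (hij : κ i ≤ κ j) :
    fderiv ℝ F κ (Pi.single j 1) ≤ fderiv ℝ F κ (Pi.single i 1) := by
  rcases eq_or_ne i j with rfl | hne
  · exact le_rfl
  set w : Fin n → ℝ := Pi.single j 1 - Pi.single i 1 with hw
  have hcont : Filter.Tendsto (fun t : ℝ => κ + t • w) (nhds 0) (nhds κ) := by
    have : Continuous (fun t : ℝ => κ + t • w) := by fun_prop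
    simpa using this.tendsto 0
  have hmem : ∀ᶠ t : ℝ in nhds 0, κ + t • w ∈ Γ := hcont (hopen.mem_nhds hκ)
  have hslope := (hd.hasFDerivAt.hasLineDerivAt w).tendsto_slope_zero_right
  have hle : fderiv ℝ F κ w ≤ 0 := by
    refine le_of_tendsto hslope ?_
    filter_upwards [self_mem_nhdsWithin, nhdsWithin_le_nhds hmem] with t ht hx
    have ht : 0 < t := ht
    have hseg : κ ∈ segment ℝ (κ + t • w) ((κ + t • w) ∘ Equiv.swap i j) := by
      have hpos : 0 < κ j - κ i + 2 * t := by linarith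
      obtain ⟨s, hs0, hs1, hs⟩ : ∃ s : ℝ, 0 ≤ s ∧ s ≤ 1 ∧ s * (κ j - κ i + 2 * t) = t :=
        ⟨t / (κ j - κ i + 2 * t), div_nonneg ht.le hpos.le,
          (div_le_one hpos).2 (by linarith), div_mul_cancel₀ _ hpos.ne'⟩
      refine ⟨1 - s, s, by linarith, hs0, by ring, ?_⟩
      ext k
      by_cases hki : k = i
      · subst hki
        simp [hw, hne]
        linear_combination hs
      by_cases hkj : k = j
      · subst hkj
        simp [hw, hne]
        linear_combination -hs
      simp [hw, hki, hkj, Equiv.swap_apply_of_ne_of_ne hki hkj]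
      ring
    have hmin := hlog.ge_on_segment hx (hperm (Equiv.swap i j) _ hx) hseg
    simp only [hFsym (Equiv.swap i j) _ hx, min_self] at hmin
    have hFle := (Real.log_le_log_iff (hFpos _ hx) (hFpos _ hκ)).1 hmin
    rw [smul_eq_mul]
    exact mul_nonpos_of_nonneg_of_nonpos (by positivity) (by linarith)
  rw [hw, map_sub] at hle
  linarith

/-- let `Γ ⊆ ℝⁿ` be an open convex cone invariant under coordinate
permutations, and `F ∈ C²(Γ)` positive, symmetric, with `∂F/∂κᵢ > 0` on `Γ` and `log F`
concave on `Γ`.  If `κ ∈ Γ` and `κ_{i₀}` is either negative or the smallest component of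
`κ`, then `Σᵢ ∂F/∂κᵢ(κ)·κᵢ² ≥ (1/n)·(Σᵢ ∂F/∂κᵢ(κ))·κ_{i₀}²`. -/
theorem stmt12 {n : ℕ} (Γ : Set (Fin n → ℝ)) (hopen : IsOpen Γ) (hconv : Convex ℝ Γ)
    (hcone : ∀ κ ∈ Γ, ∀ t : ℝ, 0 < t → t • κ ∈ Γ)
    (hperm : ∀ σ : Equiv.Perm (Fin n), ∀ κ ∈ Γ, (κ ∘ σ) ∈ Γ)
    (F : (Fin n → ℝ) → ℝ) (hF : ContDiffOn ℝ 2 F Γ)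
    (hFpos : ∀ κ ∈ Γ, 0 < F κ)
    (hFsym : ∀ σ : Equiv.Perm (Fin n), ∀ κ ∈ Γ, F (κ ∘ σ) = F κ)
    (hFmono : ∀ κ ∈ Γ, ∀ i, 0 < fderiv ℝ F κ (Pi.single i 1))
    (hlog : ConcaveOn ℝ Γ (fun κ => Real.log (F κ)))
    (κ : Fin n → ℝ) (hκ : κ ∈ Γ) (i₀ : Fin n)
    (hi₀ : κ i₀ < 0 ∨ ∀ j, κ i₀ ≤ κ j) :
    (1 / (n : ℝ)) * (∑ i, fderiv ℝ F κ (Pi.single i 1)) * κ i₀ ^ 2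
      ≤ ∑ i, fderiv ℝ F κ (Pi.single i 1) * κ i ^ 2 := by
  have : Nonempty (Fin n) := ⟨i₀⟩
  obtain ⟨m, hm⟩ := Finite.exists_min κ
  have hn : (0 : ℝ) < n := by exact_mod_cast i₀.pos
  have hd : DifferentiableAt ℝ F κ :=
    (hF.contDiffAt (hopen.mem_nhds hκ)).differentiableAt (by norm_num)
  have hsum : ∑ i, fderiv ℝ F κ (Pi.single i 1) ≤ n * fderiv ℝ F κ (Pi.single m 1) := by
    have := Finset.sum_le_card_nsmul Finset.univ (fun i => fderiv ℝ F κ (Pi.single i 1)) _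
      (fun i _ => fderiv_single_le_of_le hopen hperm hFpos hFsym hlog hκ hd (hm i))
    simpa using this
  have hsq : κ i₀ ^ 2 ≤ κ m ^ 2 := by
    rcases hi₀ with h | h
    · nlinarith [hm i₀]
    · rw [le_antisymm (h m) (hm i₀)]
  calc (1 / (n : ℝ)) * (∑ i, fderiv ℝ F κ (Pi.single i 1)) * κ i₀ ^ 2
      ≤ fderiv ℝ F κ (Pi.single m 1) * κ i₀ ^ 2 := by
        refine mul_le_mul_of_nonneg_right ?_ (sq_nonneg _)
        rw [one_div, inv_mul_le_iff₀ hn]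
        exact hsum
    _ ≤ fderiv ℝ F κ (Pi.single m 1) * κ m ^ 2 :=
        mul_le_mul_of_nonneg_left hsq (hFmono κ hκ m).le
    _ ≤ ∑ i, fderiv ℝ F κ (Pi.single i 1) * κ i ^ 2 :=
        Finset.single_le_sum (f := fun i => fderiv ℝ F κ (Pi.single i 1) * κ i ^ 2)
          (fun i _ => mul_nonneg (hFmono κ hκ i).le (sq_nonneg _)) (Finset.mem_univ m)
end
end

section
/- The cone Γ₂ is convex, and the function κ ↦ H₂(κ)^{1/2} is concave on Γ₂. -/
/-!
The polar form `B` of `H₂` is Lorentzian: `H₂ κ = ½(H(κ)² − |κ|²)`. On the forward cone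
`{H₂ > 0, H > 0}` the reverse Cauchy–Schwarz (Aczél) inequality `√H₂(x) √H₂(y) ≤ B(x, y)` holds
(`sqrt_H2_mul_le`), and expanding `H₂(ax + by)` turns it into concavity of `√H₂` and convexity of
the forward cone. That cone is `Γ₂` (`Gamma2_eq`): being convex it is connected, and a connected
subset of `{H₂ > 0}` containing `(1, …, 1)` cannot reach `{H < 0}`, since `H₂ ≤ 0` wherever `H = 0`.
-/

noncomputable section

/-- The forward cone `{H₂ > 0, H > 0}`. -/
def forwardCone (n : ℕ) : Set (Fin n → ℝ) := {κ | 0 < H2 κ ∧ 0 < Hsum κ}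

/-- The symmetric bilinear form with `H2 κ = polarH2 κ κ`. -/
def polarH2 {n : ℕ} (x y : Fin n → ℝ) : ℝ := (Hsum x * Hsum y - ∑ i, x i * y i) / 2

lemma Hsum_comb {n : ℕ} (x y : Fin n → ℝ) (a b : ℝ) :
    Hsum (a • x + b • y) = a * Hsum x + b * Hsum y := by
  simp [Hsum, Finset.sum_add_distrib, Finset.mul_sum]

lemma H2_comb {n : ℕ} (x y : Fin n → ℝ) (a b : ℝ) :
    H2 (a • x + b • y) = a ^ 2 * H2 x + 2 * a * b * polarH2 x y + b ^ 2 * H2 y := by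
  have h : ∑ i, (a • x + b • y) i ^ 2
      = a ^ 2 * ∑ i, x i ^ 2 + 2 * a * b * ∑ i, x i * y i + b ^ 2 * ∑ i, y i ^ 2 := by
    simp only [Finset.mul_sum, ← Finset.sum_add_distrib]
    refine Finset.sum_congr rfl fun i _ => ?_
    simp only [Pi.add_apply, Pi.smul_apply, smul_eq_mul]
    ring
  unfold H2 polarH2
  rw [h, Hsum_comb]
  ring

/-- Reverse Cauchy–Schwarz inequality on the forward cone. -/
lemma sqrt_H2_mul_le {n : ℕ} {x y : Fin n → ℝ} (hx : x ∈ forwardCone n)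
    (hy : y ∈ forwardCone n) : √(H2 x) * √(H2 y) ≤ polarH2 x y := by
  obtain ⟨hx2, hx1⟩ := hx
  obtain ⟨hy2, hy1⟩ := hy
  have hcs := Real.sum_mul_le_sqrt_mul_sqrt Finset.univ x y
  rw [← Real.sqrt_mul hx2.le]
  unfold H2 at *
  unfold polarH2
  set s := √(∑ i, x i ^ 2) with hs
  set t := √(∑ i, y i ^ 2) with ht
  have hs2 : s ^ 2 = ∑ i, x i ^ 2 := Real.sq_sqrt (Finset.sum_nonneg fun i _ => sq_nonneg _)
  have ht2 : t ^ 2 = ∑ i, y i ^ 2 := Real.sq_sqrt (Finset.sum_nonneg fun i _ => sq_nonneg _)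
  have hs0 : 0 ≤ s := Real.sqrt_nonneg _
  have ht0 : 0 ≤ t := Real.sqrt_nonneg _
  rw [← hs2] at hx2 ⊢
  rw [← ht2] at hy2 ⊢
  have hsx : s < Hsum x := lt_of_pow_lt_pow_left₀ 2 hx1.le (by linarith)
  have hty : t < Hsum y := lt_of_pow_lt_pow_left₀ 2 hy1.le (by linarith)
  have hst : s * t ≤ Hsum x * Hsum y := mul_le_mul hsx.le hty.le ht0 hx1.le
  have key : √((Hsum x ^ 2 - s ^ 2) / 2 * ((Hsum y ^ 2 - t ^ 2) / 2))
      ≤ (Hsum x * Hsum y - s * t) / 2 := by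
    rw [Real.sqrt_le_left (by linarith)]
    -- `(ab - st)² - (a² - s²)(b² - t²) = (at - bs)²`
    nlinarith [sq_nonneg (Hsum x * t - Hsum y * s)]
  linarith

/-- Superadditivity of `√H₂` in squared form, so that positivity of `H₂(ax + by)` follows too. -/
lemma sq_le_H2_comb {n : ℕ} {x y : Fin n → ℝ} (hx : x ∈ forwardCone n)
    (hy : y ∈ forwardCone n) {a b : ℝ} (ha : 0 ≤ a) (hb : 0 ≤ b) :
    (a * √(H2 x) + b * √(H2 y)) ^ 2 ≤ H2 (a • x + b • y) := by
  have h := mul_le_mul_of_nonneg_left (sqrt_H2_mul_le hx hy) (mul_nonneg ha hb)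
  have h1 := Real.sq_sqrt hx.1.le
  have h2 := Real.sq_sqrt hy.1.le
  rw [H2_comb]
  calc (a * √(H2 x) + b * √(H2 y)) ^ 2
      = a ^ 2 * √(H2 x) ^ 2 + 2 * (a * b * (√(H2 x) * √(H2 y))) + b ^ 2 * √(H2 y) ^ 2 := by ring
    _ ≤ _ := by rw [h1, h2]; linarith

/-- A nontrivial nonnegative combination of positive numbers is positive. -/
lemma comb_pos {a b u v : ℝ} (ha : 0 ≤ a) (hb : 0 ≤ b) (hab : a + b = 1) (hu : 0 < u)
    (hv : 0 < v) : 0 < a * u + b * v :=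
  convex_Ioi (0 : ℝ) hu hv ha hb hab

lemma convex_forwardCone (n : ℕ) : Convex ℝ (forwardCone n) := by
  intro x hx y hy a b ha hb hab
  refine ⟨lt_of_lt_of_le (pow_pos ?_ 2) (sq_le_H2_comb hx hy ha hb), ?_⟩
  · exact comb_pos ha hb hab (Real.sqrt_pos.2 hx.1) (Real.sqrt_pos.2 hy.1)
  · rw [Hsum_comb]
    exact comb_pos ha hb hab hx.2 hy.2

lemma concaveOn_sqrt_H2 (n : ℕ) : ConcaveOn ℝ (forwardCone n) (fun κ => √(H2 κ)) :=
  ⟨convex_forwardCone n, fun _ hx _ hy _ _ ha hb _ =>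
    Real.le_sqrt_of_sq_le (sq_le_H2_comb hx hy ha hb)⟩

lemma one_mem_forwardCone {n : ℕ} (hn : 2 ≤ n) : (fun _ => 1) ∈ forwardCone n := by
  have h : (2 : ℝ) ≤ n := by exact_mod_cast hn
  constructor
  · simp only [H2, Hsum, Finset.sum_const, Finset.card_univ, Fintype.card_fin, nsmul_eq_mul]
    nlinarith
  · simp only [Hsum, Finset.sum_const, Finset.card_univ, Fintype.card_fin, nsmul_eq_mul]
    linarith

lemma Gamma2_eq {n : ℕ} (hn : 2 ≤ n) : Gamma2 n = forwardCone n := by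
  have h1 := one_mem_forwardCone hn
  apply Set.Subset.antisymm
  · intro κ hκ
    have hpos : ∀ z ∈ Gamma2 n, 0 < H2 z := fun z hz =>
      connectedComponentIn_subset {κ : Fin n → ℝ | 0 < H2 κ} _ hz
    refine ⟨hpos κ hκ, ?_⟩
    by_contra! hneg
    have hcont : ContinuousOn (Hsum (n := n)) (Gamma2 n) := by
      unfold Hsum
      fun_prop
    -- By the intermediate value theorem `H` vanishes somewhere on `Γ₂`, where then `H₂ ≤ 0`.
    obtain ⟨z, hz, hz0⟩ := isPreconnected_connectedComponentIn.intermediate_value hκ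
      (mem_connectedComponentIn h1.1) hcont ⟨hneg, h1.2.le⟩
    have hz2 := hpos z hz
    have hsq : 0 ≤ ∑ i, z i ^ 2 := Finset.sum_nonneg fun i _ => sq_nonneg _
    rw [H2, hz0] at hz2
    linarith
  · exact (convex_forwardCone n).isPreconnected.subset_connectedComponentIn h1 fun _ hz => hz.1

/-- the cone `Γ₂` is convex and `κ ↦ H₂(κ)^{1/2}` is concave on `Γ₂`. -/
theorem stmt17 {n : ℕ} (hn : 2 ≤ n) :
    Convex ℝ (Gamma2 n) ∧ ConcaveOn ℝ (Gamma2 n) (fun κ => Real.sqrt (H2 κ)) := by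
  rw [Gamma2_eq hn]
  exact ⟨convex_forwardCone n, concaveOn_sqrt_H2 n⟩
end
end
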